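/- Let m ∈ ℕ with m ≥ 1 and let A ⊆ ℕ^m. Then the following are equivalent: (1) there exist functions α : 𝒫_f(ℕ^ℕ) → ℕ and H : 𝒫_f(ℕ^ℕ) → 𝒫_f(ℕ) such that (a) whenever F, G ∈ 𝒫_f(ℕ^ℕ) and F ⊊ G one has max H(F) < min H(G), and (b) whenever G₁ ⊊ G₂ ⊊ ⋯ ⊊ G_n ⊊ ⋯ is an infinite strictly increasing chain in 𝒫_f(ℕ^ℕ), f_i ∈ G_i for each i ∈ ℕ, and β₁ < β₂ < ⋯ < β_m are in 𝒫_f(ℕ), the tuple (Σ_{i∈β₁}(α(G_i)+Σ_{t∈H(G_i)}f_i(t)), …, Σ_{i∈β_m}(α(G_i)+Σ_{t∈H(G_i)}f_i(t))) belongs to A; (2) there exists an idempotent ultrafilter p ∈ 𝒥 such that A ∈ ⊗_{i=1}^m p. -/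

import Mathlib

namespace MultiCST

/-- The sum `p + q` of ultrafilters on ℕ: `A ∈ p + q` iff `{x : {y : x+y ∈ A} ∈ q} ∈ p`. -/
def uAdd (p q : Ultrafilter ℕ) : Ultrafilter ℕ :=
  p.bind fun x => q.map fun y => x + y

/-- `A ⊆ ℕ` is a J-set. -/
def IsJSet (A : Set ℕ) : Prop :=
  ∀ F : Finset (ℕ → ℕ), F.Nonempty →
    ∃ (a : ℕ) (β : Finset ℕ), β.Nonempty ∧ ∀ f ∈ F, a + ∑ t ∈ β, f t ∈ A

/-- `p ∈ 𝒥`: every member of `p` is a J-set. -/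
def MemJ (p : Ultrafilter ℕ) : Prop := ∀ A : Set ℕ, A ∈ p → IsJSet A

/-- `p` is an idempotent ultrafilter. -/
def IdempotentUF (p : Ultrafilter ℕ) : Prop := uAdd p p = p

/-- `p` is a minimal idempotent ultrafilter. -/
def IsMinimalIdempotent (p : Ultrafilter ℕ) : Prop :=
  IdempotentUF p ∧
    ∀ q : Ultrafilter ℕ, IdempotentUF q → uAdd q p = q → uAdd p q = q → q = p

/-- Tensor product `⊗_{i=1}^m p_i` of ultrafilters on ℕ, as an ultrafilter on `Fin m → ℕ`. -/
def tensor : ∀ m : ℕ, (Fin m → Ultrafilter ℕ) → Ultrafilter (Fin m → ℕ)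
  | 0, _ => pure fun i => i.elim0
  | m + 1, p =>
      (p 0).bind fun x => (tensor m fun i => p i.succ).map fun v => Fin.cons x v

/-- `f : ℕ → ℕ` is (given by) a polynomial with coefficients in ℕ and zero constant term. -/
def IsPolyZeroConst (f : ℕ → ℕ) : Prop :=
  ∃ P : Polynomial ℕ, P.coeff 0 = 0 ∧ ∀ x, f x = P.eval x

/-- The linear combination `a₁·p₁ + a₂·p₂ + ⋯ + a_m·p_m` of ultrafilters on ℕ. -/
def linComb : ∀ m : ℕ, (Fin m → ℕ) → (Fin m → Ultrafilter ℕ) → Ultrafilter ℕ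
  | 0, _, _ => pure 0
  | m + 1, a, p =>
      uAdd ((p 0).map fun x => a 0 * x)
        (linComb m (fun i => a i.succ) fun i => p i.succ)

theorem mem_uAdd (p q : Ultrafilter ℕ) (B : Set ℕ) :
    B ∈ uAdd p q ↔ {x | {y | x + y ∈ B} ∈ q} ∈ p := Iff.rfl

theorem mem_tensor_succ (m : ℕ) (p : Fin (m + 1) → Ultrafilter ℕ) (B : Set (Fin (m + 1) → ℕ)) :
    B ∈ tensor (m + 1) p ↔
      {x | {v | (Fin.cons x v : Fin (m + 1) → ℕ) ∈ B} ∈ tensor m fun i => p i.succ} ∈ p 0 :=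
  Iff.rfl

theorem mem_tensor_zero (p : Fin 0 → Ultrafilter ℕ) (B : Set (Fin 0 → ℕ)) :
    B ∈ tensor 0 p ↔ (fun i => i.elim0) ∈ B := Iff.rfl

theorem IsJSet.mono {A B : Set ℕ} (h : IsJSet A) (hAB : A ⊆ B) : IsJSet B := by
  intro F hF
  obtain ⟨a, β, hβ, h⟩ := h F hF
  exact ⟨a, β, hβ, fun f hf => hAB (h f hf)⟩

theorem not_isJSet_empty : ¬ IsJSet ∅ := by
  intro h
  obtain ⟨a, β, _, h⟩ := h {fun _ => 0} ⟨_, Finset.mem_singleton_self _⟩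
  exact h _ (Finset.mem_singleton_self _)

/-- J-sets with the index set far out (the family may be empty). -/
theorem IsJSet.far {A : Set ℕ} (h : IsJSet A) (F : Finset (ℕ → ℕ)) (N : ℕ) :
    ∃ (a : ℕ) (β : Finset ℕ), β.Nonempty ∧ (∀ t ∈ β, N ≤ t) ∧
      ∀ f ∈ F, a + ∑ t ∈ β, f t ∈ A := by
  classical
  obtain ⟨a, β, hβ, h⟩ := h (insert 0 (F.image fun f t => f (t + N))) ⟨0, by simp⟩
  refine ⟨a, β.map (addRightEmbedding N), by simpa using hβ, ?_, ?_⟩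
  · intro t ht
    simp only [Finset.mem_map, addRightEmbedding_apply] at ht
    obtain ⟨s, _, rfl⟩ := ht
    omega
  · intro f hf
    have := h (fun t => f (t + N)) (Finset.mem_insert_of_mem (Finset.mem_image_of_mem _ hf))
    simpa using this

/-- Partition regularity of J-sets. -/
theorem IsJSet.union {A B : Set ℕ} (h : IsJSet (A ∪ B)) : IsJSet A ∨ IsJSet B := by
  classical
  by_contra hcon
  push Not at hcon
  obtain ⟨hA, hB⟩ := hcon
  unfold IsJSet at hA hB
  push Not at hA hB
  obtain ⟨F₁, hF₁, hA⟩ := hA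
  obtain ⟨F₂, hF₂, hB⟩ := hB
  let F := F₁ ∪ F₂
  obtain ⟨ι, _, hHJ⟩ := Combinatorics.Line.exists_mono_in_high_dimension (↥F) Prop
  obtain ⟨e, he⟩ := Countable.exists_injective_nat (ℕ × ι)
  let g : (ι → ↥F) → ℕ → ℕ := fun w t => ∑ i, (w i : ℕ → ℕ) (e (t, i))
  have hne : (Finset.univ.image g).Nonempty := by
    obtain ⟨f, hf⟩ := hF₁
    exact ⟨_, Finset.mem_image_of_mem g (Finset.mem_univ fun _ => ⟨f, Finset.mem_union_left _ hf⟩)⟩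
  obtain ⟨a, β, hβ, hab⟩ := h _ hne
  have hab' : ∀ w, a + ∑ t ∈ β, g w t ∈ A ∪ B := fun w =>
    hab _ (Finset.mem_image_of_mem g (Finset.mem_univ w))
  obtain ⟨l, c, hl⟩ := hHJ fun w => a + ∑ t ∈ β, g w t ∈ A
  let I : Finset ι := Finset.univ.filter fun i => l.idxFun i = none
  let J : Finset ι := Finset.univ.filter fun i => ¬ l.idxFun i = none
  have hI : I.Nonempty := by
    obtain ⟨i, hi⟩ := l.proper
    exact ⟨i, by simp [I, hi]⟩
  obtain ⟨f0, hf0⟩ := hF₁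
  let d : ↥F := ⟨f0, Finset.mem_union_left _ hf0⟩
  let a' := a + ∑ t ∈ β, ∑ i ∈ J, ((l.idxFun i).getD d : ℕ → ℕ) (e (t, i))
  let β' := (β ×ˢ I).image e
  have hβ' : β'.Nonempty := (hβ.product hI).image e
  have key : ∀ f : ↥F, a + ∑ t ∈ β, g (l f) t = a' + ∑ s ∈ β', (f : ℕ → ℕ) s := by
    intro f
    have h1 : ∑ s ∈ β', (f : ℕ → ℕ) s = ∑ t ∈ β, ∑ i ∈ I, (f : ℕ → ℕ) (e (t, i)) := by
      rw [Finset.sum_image (fun x _ y _ hxy => he hxy), Finset.sum_product]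
    rw [h1, add_assoc, ← Finset.sum_add_distrib]
    congr 1
    refine Finset.sum_congr rfl fun t _ => ?_
    simp only [g]
    rw [← Finset.sum_filter_add_sum_filter_not Finset.univ (fun i => l.idxFun i = none), add_comm]
    congr 1
    · refine Finset.sum_congr rfl fun i hi => ?_
      have hi' : l.idxFun i ≠ none := (Finset.mem_filter.1 hi).2
      obtain ⟨y, hy⟩ := Option.ne_none_iff_exists'.1 hi'
      simp [hy]
    · refine Finset.sum_congr rfl fun i hi => ?_
      have hi' : l.idxFun i = none := (Finset.mem_filter.1 hi).2
      simp [hi']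
  by_cases hc : c
  · obtain ⟨f, hf, hfn⟩ := hA a' β' hβ'
    apply hfn
    have := hl ⟨f, Finset.mem_union_left _ hf⟩
    rw [← key ⟨f, Finset.mem_union_left _ hf⟩]
    exact this.symm.mp hc
  · obtain ⟨f, hf, hfn⟩ := hB a' β' hβ'
    apply hfn
    have := hl ⟨f, Finset.mem_union_right _ hf⟩
    rw [← key ⟨f, Finset.mem_union_right _ hf⟩]
    refine (hab' _).resolve_left fun hx => hc ?_
    exact this.mp hx

/-- The filter of sets whose complement is not a J-set. -/
def coJ : Filter ℕ where
  sets := {B | ¬ IsJSet Bᶜ}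
  univ_sets := by simpa using not_isJSet_empty
  sets_of_superset := fun {x y} hx hxy h => hx (h.mono (Set.compl_subset_compl.2 hxy))
  inter_sets := fun {x y} hx hy h => by
    rw [Set.compl_inter] at h
    exact h.union.elim hx hy

theorem exists_memJ (T : Finset (ℕ → ℕ) → Set ℕ) (hT : ∀ F, IsJSet (T F))
    (hmono : ∀ F G, F ⊆ G → T G ⊆ T F) :
    ∃ p : Ultrafilter ℕ, MemJ p ∧ ∀ F, T F ∈ p := by
  classical
  have hdir : Directed (· ≥ ·) fun F => Filter.principal (T F) := by
    intro F G
    exact ⟨F ∪ G, Filter.principal_mono.2 (hmono _ _ Finset.subset_union_left),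
      Filter.principal_mono.2 (hmono _ _ Finset.subset_union_right)⟩
  have hne : (coJ ⊓ ⨅ F, Filter.principal (T F)).NeBot := by
    rw [Filter.inf_neBot_iff]
    intro s hs t ht
    rw [Filter.mem_iInf_of_directed hdir] at ht
    obtain ⟨F, hF⟩ := ht
    by_contra hemp
    rw [Set.not_nonempty_iff_eq_empty] at hemp
    refine hs ((hT F).mono fun x hx hxs => ?_)
    have : x ∈ s ∩ t := ⟨hxs, hF hx⟩
    rw [hemp] at this
    exact this
  refine ⟨Ultrafilter.of (coJ ⊓ ⨅ F, Filter.principal (T F)), ?_, ?_⟩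
  · intro B hB
    by_contra hJ
    have h1 : Bᶜ ∈ coJ := by
      change ¬ IsJSet Bᶜᶜ
      rwa [compl_compl]
    have h2 := Ultrafilter.of_le _ (Filter.mem_inf_of_left h1 (g := ⨅ F, Filter.principal (T F)))
    exact (Ultrafilter.compl_notMem_iff.2 hB) h2
  · intro F
    exact Ultrafilter.of_le _ (Filter.mem_inf_of_right
      (Filter.mem_iInf_of_mem F (Filter.mem_principal_self _)))

/-- `G, f` is an infinite strictly increasing chain above `F`, with a selection. -/
def IsCh (F : Finset (ℕ → ℕ)) (G : ℕ → Finset (ℕ → ℕ)) (f : ℕ → ℕ → ℕ) : Prop :=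
  F ⊂ G 0 ∧ (∀ i j, i < j → G i ⊂ G j) ∧ ∀ i, f i ∈ G i

theorem exists_chain (F : Finset (ℕ → ℕ)) (G0 : Finset (ℕ → ℕ)) (h : F ⊂ G0) (g : ℕ → ℕ)
    (hg : g ∈ G0) : ∃ G f, IsCh F G f ∧ G 0 = G0 ∧ f 0 = g := by
  have hn : ∀ K : Finset (ℕ → ℕ), ∃ K', K ⊂ K' := by
    classical
    intro K
    obtain ⟨x, hx⟩ := Infinite.exists_notMem_finset K
    exact ⟨insert x K, Finset.ssubset_insert hx⟩
  choose nx hnx using hn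
  have hm : StrictMono fun i : ℕ => nx^[i] G0 := by
    refine strictMono_nat_of_lt_succ fun n => ?_
    rw [Function.iterate_succ_apply']
    exact hnx _
  refine ⟨fun i => nx^[i] G0, fun _ => g, ⟨h, fun i j hij => hm hij, fun i => ?_⟩, rfl, rfl⟩
  exact (hm.monotone (Nat.zero_le i)) hg

theorem concat_chain {F : Finset (ℕ → ℕ)} {G' G : ℕ → Finset (ℕ → ℕ)} {f' f : ℕ → ℕ → ℕ} {n : ℕ}
    (h' : IsCh F G' f') (h : IsCh (G' n) G f) :
    ∃ K k, IsCh F K k ∧ (∀ i ∈ Finset.range (n + 1), K i = G' i ∧ k i = f' i) ∧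
      ∀ j, K (n + 1 + j) = G j ∧ k (n + 1 + j) = f j := by
  refine ⟨fun i => if i < n + 1 then G' i else G (i - (n + 1)),
    fun i => if i < n + 1 then f' i else f (i - (n + 1)), ⟨?_, ?_, ?_⟩, ?_, ?_⟩
  · simpa using h'.1
  · intro i j hij
    by_cases hj : j < n + 1
    · have hi : i < n + 1 := by omega
      simpa only [hi, hj, if_true] using h'.2.1 i j hij
    · by_cases hi : i < n + 1
      · simp only [hi, hj, if_true, if_false]
        have h1 : G' i ⊆ G' n := by
          rcases (Nat.lt_succ_iff.1 hi).eq_or_lt with rfl | h2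
          · exact subset_rfl
          · exact (h'.2.1 _ _ h2).subset
        have h3 : G 0 ⊆ G (j - (n + 1)) := by
          rcases (Nat.zero_le (j - (n + 1))).eq_or_lt with h2 | h2
          · rw [← h2]
          · exact (h.2.1 _ _ h2).subset
        exact (h1.trans_ssubset h.1).trans_subset h3
      · simp only [hi, hj, if_false]
        exact h.2.1 _ _ (by omega)
  · intro i
    by_cases hi : i < n + 1
    · simpa only [hi, if_true] using h'.2.2 i
    · simpa only [hi, if_false] using h.2.2 _
  · intro i hi
    simp [Finset.mem_range.1 hi]
  · intro j
    have hj : ¬ n + 1 + j < n + 1 := by omega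
    simp only [hj, if_false, Nat.add_sub_cancel_left, and_self]

/-- Block sums along chains above `F`. -/
def TS (v : Finset (ℕ → ℕ) → (ℕ → ℕ) → ℕ) (F : Finset (ℕ → ℕ)) : Set ℕ :=
  {s | ∃ G f n, IsCh F G f ∧ s = ∑ i ∈ Finset.range (n + 1), v (G i) (f i)}

theorem TS_mono (v) (F G : Finset (ℕ → ℕ)) (h : F ⊆ G) : TS v G ⊆ TS v F := by
  rintro s ⟨K, f, n, hK, rfl⟩
  exact ⟨K, f, n, ⟨h.trans_ssubset hK.1, hK.2⟩, rfl⟩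

theorem concat_sum (v : Finset (ℕ → ℕ) → (ℕ → ℕ) → ℕ) {G' G K : ℕ → Finset (ℕ → ℕ)}
    {f' f k : ℕ → ℕ → ℕ} {n : ℕ}
    (h1 : ∀ i ∈ Finset.range (n + 1), K i = G' i ∧ k i = f' i)
    (h2 : ∀ j, K (n + 1 + j) = G j ∧ k (n + 1 + j) = f j) (r : ℕ) :
    ∑ i ∈ Finset.range (n + 1 + r), v (K i) (k i) =
      ∑ i ∈ Finset.range (n + 1), v (G' i) (f' i) + ∑ i ∈ Finset.range r, v (G i) (f i) := by
  rw [Finset.sum_range_add]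
  congr 1
  · exact Finset.sum_congr rfl fun i hi => by rw [(h1 i hi).1, (h1 i hi).2]
  · exact Finset.sum_congr rfl fun i _ => by rw [(h2 i).1, (h2 i).2]

theorem mem_tensor_of_TS (v : Finset (ℕ → ℕ) → (ℕ → ℕ) → ℕ) (p : Ultrafilter ℕ)
    (hp : ∀ F, TS v F ∈ p) : ∀ (m : ℕ) (A : Set (Fin m → ℕ)) (F : Finset (ℕ → ℕ)),
    (∀ G f, IsCh F G f → ∀ β : Fin m → Finset ℕ, (∀ l, (β l).Nonempty) →
      (∀ l l' : Fin m, l < l' → ∀ x ∈ β l, ∀ y ∈ β l', x < y) →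
      (fun l => ∑ i ∈ β l, v (G i) (f i)) ∈ A) → A ∈ tensor m fun _ => p := by
  classical
  intro m
  induction m with
  | zero =>
    intro A F h
    rw [mem_tensor_zero]
    obtain ⟨x, hx⟩ := Infinite.exists_notMem_finset F
    obtain ⟨G, f, hG, -⟩ := exists_chain F (insert x F) (Finset.ssubset_insert hx) x (by simp)
    convert h G f hG (fun i => i.elim0) (fun i => i.elim0) (fun i => i.elim0) using 1
  | succ m ih =>
    intro A F h
    rw [mem_tensor_succ]
    refine Filter.mem_of_superset (hp F) ?_
    rintro s ⟨G', f', n, hG', rfl⟩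
    refine ih _ (G' n) ?_
    intro G f hG β hβ hlt
    obtain ⟨K, k, hK, h1, h2⟩ := concat_chain hG' hG
    have := h K k hK (Fin.cons (Finset.range (n + 1)) fun l => (β l).map (addLeftEmbedding (n + 1)))
      ?_ ?_
    · change (Fin.cons _ _ : Fin (m + 1) → ℕ) ∈ A
      convert this using 1
      ext l
      refine Fin.cases ?_ (fun l => ?_) l
      · simp only [Fin.cons_zero]
        exact Finset.sum_congr rfl fun i hi => by rw [(h1 i hi).1, (h1 i hi).2]
      · simp only [Fin.cons_succ, Finset.sum_map, addLeftEmbedding_apply]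
        exact Finset.sum_congr rfl fun i _ => by rw [(h2 i).1, (h2 i).2]
    · intro l
      refine Fin.cases ?_ (fun l => ?_) l
      · simp
      · simpa using hβ l
    · intro l l'
      refine Fin.cases ?_ (fun l => ?_) l <;> refine Fin.cases ?_ (fun l' => ?_) l'
      · simp
      · intro _ x hx y hy
        simp only [Fin.cons_zero, Finset.mem_range] at hx
        simp only [Fin.cons_succ, Finset.mem_map, addLeftEmbedding_apply] at hy
        obtain ⟨z, _, rfl⟩ := hy
        omega
      · simp
      · intro hll x hx y hy
        simp only [Fin.cons_succ, Finset.mem_map, addLeftEmbedding_apply] at hx hy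
        obtain ⟨z, hz, rfl⟩ := hy
        obtain ⟨w, hw, rfl⟩ := hx
        have := hlt l l' (by simpa using hll) w hw z hz
        omega

attribute [local instance] Ultrafilter.add Ultrafilter.addSemigroup

theorem exists_idem (T : Finset (ℕ → ℕ) → Set ℕ) (hT : ∀ F, IsJSet (T F))
    (hmono : ∀ F G, F ⊆ G → T G ⊆ T F)
    (hsg : ∀ F, ∀ x ∈ T F, ∃ G, ∀ y ∈ T G, x + y ∈ T F) :
    ∃ p : Ultrafilter ℕ, IdempotentUF p ∧ MemJ p ∧ ∀ F, T F ∈ p := by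
  let S : Set (Ultrafilter ℕ) := {p | MemJ p ∧ ∀ F, T F ∈ p}
  have hS : IsClosed S := by
    have : S = (⋂ (B : Set ℕ) (_ : ¬ IsJSet B), {p : Ultrafilter ℕ | Bᶜ ∈ p}) ∩
        ⋂ F, {p : Ultrafilter ℕ | T F ∈ p} := by
      ext p
      simp only [S, MemJ, Set.mem_ofPred_eq, Set.mem_inter_iff, Set.mem_iInter,
        Ultrafilter.compl_mem_iff_notMem]
      refine and_congr_left fun _ => forall_congr' fun B => ?_
      exact not_imp_not.symm
    rw [this]
    exact (isClosed_iInter fun B => isClosed_iInter fun _ => ultrafilter_isClosed_basic _).inter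
      (isClosed_iInter fun F => ultrafilter_isClosed_basic _)
  suffices hsum : ∀ᵉ (x ∈ S) (y ∈ S), x + y ∈ S by
    obtain ⟨p, hp, hpp⟩ := exists_idempotent_in_compact_add_subsemigroup
      (M := Ultrafilter ℕ) Ultrafilter.continuous_add_left S (exists_memJ T hT hmono)
      hS.isCompact hsum
    exact ⟨p, hpp, hp.1, hp.2⟩
  · intro p hp q hq
    refine ⟨fun B hB => ?_, fun F => ?_⟩
    · have hB' : {x | {y | x + y ∈ B} ∈ q} ∈ p := hB
      obtain ⟨x, hx⟩ := p.nonempty_of_mem hB'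
      intro F hF
      obtain ⟨a, β, hβ, h⟩ := hq.1 _ hx F hF
      exact ⟨x + a, β, hβ, fun f hf => by rw [add_assoc]; exact h f hf⟩
    · change {x | {y | x + y ∈ T F} ∈ q} ∈ p
      refine Filter.mem_of_superset (hp.2 F) fun x hx => ?_
      obtain ⟨G, hG⟩ := hsg F x hx
      exact Filter.mem_of_superset (hq.2 G) hG

theorem dir1 (m : ℕ) (A : Set (Fin m → ℕ)) (α : Finset (ℕ → ℕ) → ℕ)
    (H : Finset (ℕ → ℕ) → Finset ℕ) (hH : ∀ F : Finset (ℕ → ℕ), F.Nonempty → (H F).Nonempty)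
    (hA : ∀ G : ℕ → Finset (ℕ → ℕ),
        (∀ i, (G i).Nonempty) → (∀ i j, i < j → G i ⊂ G j) →
        ∀ f : ℕ → ℕ → ℕ, (∀ i, f i ∈ G i) →
        ∀ β : Fin m → Finset ℕ,
          (∀ l, (β l).Nonempty) →
          (∀ l l' : Fin m, l < l' → ∀ x ∈ β l, ∀ y ∈ β l', x < y) →
          (fun l => ∑ i ∈ β l, (α (G i) + ∑ t ∈ H (G i), f i t)) ∈ A) :
    ∃ p : Ultrafilter ℕ, IdempotentUF p ∧ MemJ p ∧ A ∈ tensor m fun _ => p := by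
  classical
  let v : Finset (ℕ → ℕ) → (ℕ → ℕ) → ℕ := fun G f => α G + ∑ t ∈ H G, f t
  suffices hex : (∀ F, IsJSet (TS v F)) ∧ ∀ F, ∀ x ∈ TS v F, ∃ G, ∀ y ∈ TS v G, x + y ∈ TS v F by
    obtain ⟨p, hp, hJ, hT⟩ := exists_idem (TS v) hex.1 (TS_mono v) hex.2
    refine ⟨p, hp, hJ, mem_tensor_of_TS v p hT m A ∅ ?_⟩
    intro G f hG β hβ hlt
    exact hA G (fun i => ⟨f i, hG.2.2 i⟩) hG.2.1 f hG.2.2 β hβ hlt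
  constructor
  · intro F K hK
    obtain ⟨x, hx⟩ := Infinite.exists_notMem_finset (F ∪ K)
    have hss : F ⊂ insert x (F ∪ K) :=
      Finset.subset_union_left.trans_ssubset (Finset.ssubset_insert hx)
    refine ⟨α (insert x (F ∪ K)), H (insert x (F ∪ K)), hH _ ⟨x, by simp⟩, fun f hf => ?_⟩
    obtain ⟨G, g, hG, h0, hg0⟩ := exists_chain F (insert x (F ∪ K)) hss f
      (by simp [hf])
    refine ⟨G, g, 0, hG, ?_⟩
    simp [h0, hg0, v]
  · rintro F x ⟨G', f', n, hG', rfl⟩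
    refine ⟨G' n, ?_⟩
    rintro y ⟨G, f, r, hG, rfl⟩
    obtain ⟨K, k, hK, h1, h2⟩ := concat_chain hG' hG
    exact ⟨K, k, n + 1 + r, hK, by rw [add_assoc (n + 1), concat_sum v h1 h2]⟩

/-- `D⋆`. -/
def star (p : Ultrafilter ℕ) (D : Set ℕ) : Set ℕ := {x | x ∈ D ∧ {y | x + y ∈ D} ∈ p}

theorem star_mem {p : Ultrafilter ℕ} (hp : IdempotentUF p) {D : Set ℕ} (hD : D ∈ p) :
    star p D ∈ p := by
  have h : D ∈ uAdd p p := by rw [hp]; exact hD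
  exact Filter.inter_mem hD h

theorem star_shift {p : Ultrafilter ℕ} (hp : IdempotentUF p) {D : Set ℕ} {x : ℕ}
    (hx : x ∈ star p D) : {y | x + y ∈ star p D} ∈ p := by
  refine Filter.mem_of_superset (star_mem hp hx.2) ?_
  rintro y ⟨h1, h2⟩
  refine ⟨h1, ?_⟩
  simpa [add_assoc] using h2

/-- Constraint-tree lemma. -/
theorem exists_tree {p : Ultrafilter ℕ} (hp : IdempotentUF p) : ∀ (m : ℕ) (A : Set (Fin m → ℕ)),
    A ∈ (tensor m fun _ => p) →
    ∃ Φ : List ℕ → Set ℕ, (∀ l, Φ l ∈ p) ∧ ∀ x : ℕ → ℕ,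
      (∀ n, x n ∈ Φ ((List.range n).map x)) →
      ∀ β : Fin m → Finset ℕ, (∀ l, (β l).Nonempty) →
        (∀ l l' : Fin m, l < l' → ∀ x ∈ β l, ∀ y ∈ β l', x < y) →
        (fun l => ∑ i ∈ β l, x i) ∈ A := by
  classical
  intro m
  induction m with
  | zero =>
    intro A hA
    rw [mem_tensor_zero] at hA
    refine ⟨fun _ => Set.univ, fun _ => Filter.univ_mem, fun x _ β _ _ => ?_⟩
    convert hA using 1
  | succ m ih =>
    intro A hA
    rw [mem_tensor_succ] at hA
    set D : Set ℕ :=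
      {x | {v | (Fin.cons x v : Fin (m + 1) → ℕ) ∈ A} ∈ tensor m fun _ => p} with hD
    have hΨ : ∀ s : ℕ, ∃ Φ : List ℕ → Set ℕ, (∀ l, Φ l ∈ p) ∧ (s ∈ D → ∀ x : ℕ → ℕ,
      (∀ n, x n ∈ Φ ((List.range n).map x)) →
      ∀ β : Fin m → Finset ℕ, (∀ l, (β l).Nonempty) →
        (∀ l l' : Fin m, l < l' → ∀ x ∈ β l, ∀ y ∈ β l', x < y) →
        (Fin.cons s (fun l => ∑ i ∈ β l, x i) : Fin (m + 1) → ℕ) ∈ A) := by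
      intro s
      by_cases hs : s ∈ D
      · obtain ⟨Φ, h1, h2⟩ := ih _ hs
        exact ⟨Φ, h1, fun _ => h2⟩
      · exact ⟨fun _ => Set.univ, fun _ => Filter.univ_mem, fun h => absurd h hs⟩
    choose Ψ hΨ1 hΨ2 using hΨ
    let sm : List ℕ → Finset ℕ → ℕ := fun l b => ∑ i ∈ b, l.getD i 0
    let Φ : List ℕ → Set ℕ := fun l =>
      (star p D ∩ ⋂ b ∈ (Finset.range l.length).powerset,
        {z | sm l b ∈ star p D → sm l b + z ∈ star p D}) ∩
      ⋂ k ∈ Finset.range (l.length + 1), ⋂ b ∈ (Finset.range l.length).powerset,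
        Ψ (sm l b) (l.drop k)
    refine ⟨Φ, ?_, ?_⟩
    · intro l
      refine Filter.inter_mem (Filter.inter_mem (star_mem hp hA) ?_) ?_
      · refine (Filter.biInter_finset_mem _).2 fun b _ => ?_
        by_cases hb : sm l b ∈ star p D
        · exact Filter.mem_of_superset (star_shift hp hb) fun z hz _ => hz
        · exact Filter.mem_of_superset Filter.univ_mem fun z _ h => absurd h hb
      · refine (Filter.biInter_finset_mem _).2 fun k _ => (Filter.biInter_finset_mem _).2 fun b _ => ?_
        exact hΨ1 _ _
    · intro x hx
      have hsm : ∀ n (b : Finset ℕ), (∀ i ∈ b, i < n) →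
          sm ((List.range n).map x) b = ∑ i ∈ b, x i := by
        intro n b hb
        refine Finset.sum_congr rfl fun i hi => ?_
        simp [List.getD, hb i hi]
      have hx1 : ∀ n, x n ∈ star p D := fun n => (hx n).1.1
      have hx2 : ∀ n (b : Finset ℕ), (∀ i ∈ b, i < n) → ∑ i ∈ b, x i ∈ star p D →
          ∑ i ∈ b, x i + x n ∈ star p D := by
        intro n b hb hs
        have h := (hx n).1.2
        simp only [Set.mem_iInter] at h
        have h := h b (by
          rw [Finset.mem_powerset]; intro i hi; simpa using hb i hi)
        simp only [Set.mem_ofPred_eq, hsm n b hb] at h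
        exact h hs
      have hx3 : ∀ n k (b : Finset ℕ), k ≤ n → (∀ i ∈ b, i < n) →
          x n ∈ Ψ (∑ i ∈ b, x i) (((List.range n).map x).drop k) := by
        intro n k b hk hb
        have h := (hx n).2
        simp only [Set.mem_iInter] at h
        have h := h k (by simp; omega) b (by
          rw [Finset.mem_powerset]; intro i hi; simpa using hb i hi)
        rwa [hsm n b hb] at h
      have hfs : ∀ n (b : Finset ℕ), b.Nonempty → (∀ i ∈ b, i < n) →
          ∑ i ∈ b, x i ∈ star p D := by
        intro n
        induction n with
        | zero =>
          rintro b ⟨i, hi⟩ hb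
          exact absurd (hb i hi) (by omega)
        | succ n ihn =>
          intro b hb hbn
          by_cases hn : n ∈ b
          · have hlt : ∀ i ∈ b.erase n, i < n := by
              intro i hi
              have h1 := hbn i (Finset.mem_of_mem_erase hi)
              have h2 := Finset.ne_of_mem_erase hi
              omega
            rw [← Finset.sum_erase_add b x hn]
            rcases (b.erase n).eq_empty_or_nonempty with h0 | h0
            · rw [h0]; simpa using hx1 n
            · exact hx2 n _ hlt (ihn _ h0 hlt)
          · refine ihn b hb fun i hi => ?_
            have h1 := hbn i hi
            have h2 : i ≠ n := fun h => hn (h ▸ hi)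
            omega
      intro β hβ hlt
      set k := (β 0).sup id + 1 with hk
      have hβk : ∀ i ∈ β 0, i < k := fun i hi =>
        Nat.lt_succ_of_le (Finset.le_sup (f := id) hi)
      have hs : ∑ i ∈ β 0, x i ∈ D := (hfs k _ (hβ 0) hβk).1
      have hge : ∀ l : Fin m, ∀ y ∈ β l.succ, k ≤ y := by
        intro l y hy
        obtain ⟨i, hi, hik⟩ := Finset.exists_mem_eq_sup (β 0) (hβ 0) id
        have := hlt 0 l.succ (Fin.succ_pos l) i hi y hy
        rw [hk, hik]
        exact this
      have hfin := hΨ2 _ hs (fun j => x (k + j)) ?_ (fun l => (β l.succ).image fun y => y - k) ?_ ?_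
      · convert hfin using 1
        ext l
        refine Fin.cases ?_ (fun l => ?_) l
        · simp
        · simp only [Fin.cons_succ]
          rw [Finset.sum_image]
          · refine Finset.sum_congr rfl fun i hi => ?_
            rw [Nat.add_sub_cancel' (hge l i hi)]
          · intro a ha b hb hab
            have h1 := hge l a ha
            have h2 := hge l b hb
            simp only at hab
            omega
      · intro n
        have h := hx3 (k + n) k (β 0) (by omega) fun i hi => (hβk i hi).trans_le (by omega)
        have he : ((List.range (k + n)).map x).drop k =
            (List.range n).map fun j => x (k + j) := by
          rw [List.range_add, List.map_append, List.drop_append_of_le_length (by simp)]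
          simp [Function.comp_def]
        rwa [he] at h
      · intro l
        exact (hβ l.succ).image _
      · intro l l' hll a ha b hb
        simp only [Finset.mem_image] at ha hb
        obtain ⟨a, ha, rfl⟩ := ha
        obtain ⟨b, hb, rfl⟩ := hb
        have h1 := hge l a ha
        have h2 := hge l' b hb
        have h3 := hlt l.succ l'.succ (by simpa using hll) a ha b hb
        omega

theorem dir2 {p : Ultrafilter ℕ} (hJ : MemJ p) (Φ : List ℕ → Set ℕ) (hΦ : ∀ l, Φ l ∈ p) :
    ∃ (α : Finset (ℕ → ℕ) → ℕ) (H : Finset (ℕ → ℕ) → Finset ℕ),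
      (∀ F : Finset (ℕ → ℕ), (H F).Nonempty) ∧
      (∀ F G : Finset (ℕ → ℕ), F ⊂ G → ∀ x ∈ H F, ∀ y ∈ H G, x < y) ∧
      (∀ G : ℕ → Finset (ℕ → ℕ), (∀ i j, i < j → G i ⊂ G j) →
        ∀ f : ℕ → ℕ → ℕ, (∀ i, f i ∈ G i) → ∀ n,
          (fun i => α (G i) + ∑ t ∈ H (G i), f i t) n ∈
          Φ ((List.range n).map fun i => α (G i) + ∑ t ∈ H (G i), f i t)) := by
  classical
  have hstep : ∀ (G : Finset (ℕ → ℕ)) (N : ℕ) (L : Finset (List ℕ)),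
      ∃ q : ℕ × Finset ℕ, q.2.Nonempty ∧ (∀ t ∈ q.2, N ≤ t) ∧
        ∀ f ∈ G, ∀ l ∈ L, q.1 + ∑ t ∈ q.2, f t ∈ Φ l := by
    intro G N L
    have hC : (⋂ l ∈ L, Φ l) ∈ p := (Filter.biInter_finset_mem _).2 fun l _ => hΦ l
    obtain ⟨a, β, h1, h2, h3⟩ := (hJ _ hC).far G N
    refine ⟨(a, β), h1, h2, fun f hf l hl => ?_⟩
    have := h3 f hf
    simp only [Set.mem_iInter] at this
    exact this l hl
  choose sel hs1 hs2 hs3 using hstep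
  -- states: (α, H) and the finite set of lists below
  let NN : ∀ G : Finset (ℕ → ℕ), (∀ F, F ⊂ G → (ℕ × Finset ℕ) × Finset (List ℕ)) → ℕ :=
    fun G r => G.ssubsets.attach.sup fun F =>
      (r F.1 (Finset.mem_ssubsets.1 F.2)).1.2.sup id + 1
  let LL : ∀ G : Finset (ℕ → ℕ), (∀ F, F ⊂ G → (ℕ × Finset ℕ) × Finset (List ℕ)) →
      Finset (List ℕ) :=
    fun G r => insert [] (G.ssubsets.attach.biUnion fun F =>
      F.1.biUnion fun f => (r F.1 (Finset.mem_ssubsets.1 F.2)).2.image fun l =>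
        l ++ [(r F.1 (Finset.mem_ssubsets.1 F.2)).1.1 +
          ∑ t ∈ (r F.1 (Finset.mem_ssubsets.1 F.2)).1.2, f t])
  let step : ∀ G : Finset (ℕ → ℕ), (∀ F, F ⊂ G → (ℕ × Finset ℕ) × Finset (List ℕ)) →
      (ℕ × Finset ℕ) × Finset (List ℕ) :=
    fun G r => (sel G (NN G r) (LL G r), LL G r)
  have wf : WellFounded (fun F G : Finset (ℕ → ℕ) => F ⊂ G) :=
    Finset.isWellFounded_ssubset.wf
  let T : Finset (ℕ → ℕ) → (ℕ × Finset ℕ) × Finset (List ℕ) := wf.fix step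
  have hT : ∀ G, T G = step G fun F _ => T F := fun G => wf.fix_eq step G
  have hT1 : ∀ G, (T G).1 = sel G (NN G fun F _ => T F) (LL G fun F _ => T F) := fun G => by
    conv_lhs => rw [hT G]
  have hT2 : ∀ G, (T G).2 = LL G fun F _ => T F := fun G => by
    conv_lhs => rw [hT G]
  refine ⟨fun G => (T G).1.1, fun G => (T G).1.2, ?_, ?_, ?_⟩
  · intro F
    simp only [hT1 F]
    exact hs1 _ _ _
  · intro F G hFG x hx y hy
    simp only [hT1 G] at hy
    have h1 := hs2 _ _ _ y hy
    have h2 : (T F).1.2.sup id + 1 ≤ NN G fun F _ => T F :=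
      Finset.le_sup (f := fun F : {F // F ∈ G.ssubsets} => (T F.1).1.2.sup id + 1)
        (Finset.mem_attach _ ⟨F, Finset.mem_ssubsets.2 hFG⟩)
    have h3 : x ≤ (T F).1.2.sup id := Finset.le_sup (f := id) hx
    omega
  · intro G hG f hf
    have hL : ∀ n, ((List.range n).map fun i => (T (G i)).1.1 + ∑ t ∈ (T (G i)).1.2, f i t) ∈
        (T (G n)).2 := by
      intro n
      induction n with
      | zero => rw [hT2]; simp [LL]
      | succ n ih =>
        rw [hT2, List.range_succ, List.map_append]
        refine Finset.mem_insert_of_mem (Finset.mem_biUnion.2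
          ⟨⟨G n, Finset.mem_ssubsets.2 (hG n (n + 1) (Nat.lt_succ_self n))⟩,
            Finset.mem_attach _ _, Finset.mem_biUnion.2 ⟨f n, hf n, ?_⟩⟩)
        exact Finset.mem_image.2 ⟨_, ih, rfl⟩
    intro n
    have h := hL n
    rw [hT2] at h
    have h' := hs3 (G n) (NN (G n) fun F _ => T F) _ (f n) (hf n) _ h
    rw [← hT1] at h'
    exact h'

/-- Multidimensional Stronger Central Sets Theorem I (infinitary form). -/
theorem multidimensional_stronger_CST_I_infinitary (m : ℕ) (hm : 1 ≤ m)
    (A : Set (Fin m → ℕ)) :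
    (∃ (α : Finset (ℕ → ℕ) → ℕ) (H : Finset (ℕ → ℕ) → Finset ℕ),
      (∀ F : Finset (ℕ → ℕ), F.Nonempty → (H F).Nonempty) ∧
      (∀ F G : Finset (ℕ → ℕ), F.Nonempty → F ⊂ G →
        ∀ x ∈ H F, ∀ y ∈ H G, x < y) ∧
      (∀ G : ℕ → Finset (ℕ → ℕ),
        (∀ i, (G i).Nonempty) → (∀ i j, i < j → G i ⊂ G j) →
        ∀ f : ℕ → ℕ → ℕ, (∀ i, f i ∈ G i) →
        ∀ β : Fin m → Finset ℕ,
          (∀ l, (β l).Nonempty) →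
          (∀ l l' : Fin m, l < l' → ∀ x ∈ β l, ∀ y ∈ β l', x < y) →
          (fun l => ∑ i ∈ β l, (α (G i) + ∑ t ∈ H (G i), f i t)) ∈ A))
    ↔
    (∃ p : Ultrafilter ℕ, IdempotentUF p ∧ MemJ p ∧ A ∈ tensor m fun _ => p) := by
  constructor
  · rintro ⟨α, H, hH, -, hA⟩
    exact dir1 m A α H hH hA
  · rintro ⟨p, hp, hJ, hA⟩
    obtain ⟨Φ, h1, h2⟩ := exists_tree hp m A hA
    obtain ⟨α, H, hH, hlt, hch⟩ := dir2 hJ Φ h1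
    refine ⟨α, H, fun F _ => hH F, fun F G _ => hlt F G, ?_⟩
    intro G _ hG f hf β hβ hβlt
    exact h2 _ (hch G hG f hf) β hβ hβlt

end MultiCST
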